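/- Let C ∈ ℝ^{n_y × m n_z}, D ∈ ℝ^{n_y × n_u}; define A, B, K from C and D by the shift construction and 𝒜 = A − KC, ℬ = B − KD; build Φ^p, Φ^u, Φ^y as the observability and Markov-parameter matrices and set P = (I − Φ^y)^{−1} Φ^p, F = (I − Φ^y)^{−1} Φ^u. Fix z_p(t) ∈ ℝ^{m n_z}, functions c_0, …, c_J : ℝ^{h n_u} × ℝ^{h n_y} → ℝ, and J ≥ 0. Then a pair (u_f^⋆, y_f^⋆) ∈ ℝ^{h n_u} × ℝ^{h n_y} is optimal for the TPC problem — minimize c_0(u_f, y_f) subject to c_j(u_f, y_f) ≤ 0 for j = 1,…,J and y_f = P z_p(t) + F u_f — if and only if the tuple (x^⋆(1|t),…,x^⋆(h+1|t), u^⋆(1|t),…,u^⋆(h|t), y^⋆(1|t),…,y^⋆(h|t)), where u_f^⋆ = (u^⋆(1|t),…,u^⋆(h|t)), y_f^⋆ = (y^⋆(1|t),…,y^⋆(h|t)), x^⋆(1|t) = z_p(t), x^⋆(i+1|t) = A x^⋆(i|t) + B u^⋆(i|t), and y^⋆(i|t) = C x^⋆(i|t) + D u^⋆(i|t) for i = 1,…,h,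 is optimal for the MPC problem — minimize c_0((u(1|t),…,u(h|t)), (y(1|t),…,y(h|t))) over states x(1|t),…,x(h+1|t) ∈ ℝ^{m n_z}, inputs u(1|t),…,u(h|t) ∈ ℝ^{n_u}, and outputs y(1|t),…,y(h|t) ∈ ℝ^{n_y}, subject to c_j ≤ 0 for j = 1,…,J, x(1|t) = z_p(t), x(i+1|t) = A x(i|t) + B u(i|t), and y(i|t) = C x(i|t) + D u(i|t) for i = 1,…,h. -/

import Mathlib

open Matrix Finset

/-- Shift construction: `A` has first `(m−1)n_z` rows `[0 I]`, next `n_u` rows zero, and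
last `n_y` rows equal to `C`. -/
def shiftA (nu ny m : ℕ) (C : Matrix (Fin ny) (Fin m × (Fin nu ⊕ Fin ny)) ℝ) :
    Matrix (Fin m × (Fin nu ⊕ Fin ny)) (Fin m × (Fin nu ⊕ Fin ny)) ℝ :=
  fun p q =>
    if hp : (p.1 : ℕ) + 1 < m then (if q = (⟨(p.1 : ℕ) + 1, hp⟩, p.2) then 1 else 0)
    else Sum.elim (fun _ : Fin nu => (0 : ℝ)) (fun b : Fin ny => C b q) p.2

/-- Shift construction: `B` is the vertical stack of `0`, `I_{n_u}`, and `D`. -/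
def shiftB (nu ny m : ℕ) (D : Matrix (Fin ny) (Fin nu) ℝ) :
    Matrix (Fin m × (Fin nu ⊕ Fin ny)) (Fin nu) ℝ :=
  fun p a =>
    if (p.1 : ℕ) + 1 = m then
      Sum.elim (fun a' : Fin nu => if a' = a then (1 : ℝ) else 0) (fun b : Fin ny => D b a) p.2
    else 0

/-- Shift construction: `K` is the vertical stack of `0` and `I_{n_y}`. -/
def shiftK (nu ny m : ℕ) : Matrix (Fin m × (Fin nu ⊕ Fin ny)) (Fin ny) ℝ :=
  fun p b =>
    if (p.1 : ℕ) + 1 = m then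
      Sum.elim (fun _ : Fin nu => (0 : ℝ)) (fun b' : Fin ny => if b' = b then (1 : ℝ) else 0) p.2
    else 0

/-- Observability matrix `Φ^p`: vertical stack of `C`, `C𝒜`, …, `C𝒜^{h−1}`. -/
noncomputable def obsMat (σ : Type) (ny h : ℕ) (C : Matrix (Fin ny) σ ℝ)
    (𝒜 : Matrix σ σ ℝ) [Fintype σ] [DecidableEq σ] : Matrix (Fin h × Fin ny) σ ℝ :=
  fun q k => (C * 𝒜 ^ (q.1 : ℕ)) q.2 k

/-- Markov-parameter matrix `Φ^u`: block lower triangular with diagonal blocks `D` and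
`(i,j)` blocks `C 𝒜^{i−j−1} ℬ` for `i > j`. -/
noncomputable def markovU (σ : Type) (nu ny h : ℕ) (C : Matrix (Fin ny) σ ℝ)
    (𝒜 : Matrix σ σ ℝ) (ℬ : Matrix σ (Fin nu) ℝ) (D : Matrix (Fin ny) (Fin nu) ℝ)
    [Fintype σ] [DecidableEq σ] : Matrix (Fin h × Fin ny) (Fin h × Fin nu) ℝ :=
  fun q r =>
    if (q.1 : ℕ) = (r.1 : ℕ) then D q.2 r.2
    else if (r.1 : ℕ) < (q.1 : ℕ) then (C * 𝒜 ^ ((q.1 : ℕ) - (r.1 : ℕ) - 1) * ℬ) q.2 r.2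
    else 0

/-- Markov-parameter matrix `Φ^y`: strictly block lower triangular with
`(i,j)` blocks `C 𝒜^{i−j−1} K` for `i > j`. -/
noncomputable def markovY (σ : Type) (ny h : ℕ) (C : Matrix (Fin ny) σ ℝ)
    (𝒜 : Matrix σ σ ℝ) (K : Matrix σ (Fin ny) ℝ) [Fintype σ] [DecidableEq σ] :
    Matrix (Fin h × Fin ny) (Fin h × Fin ny) ℝ :=
  fun q r =>
    if (r.1 : ℕ) < (q.1 : ℕ) then (C * 𝒜 ^ ((q.1 : ℕ) - (r.1 : ℕ) - 1) * K) q.2 r.2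
    else 0

/-- The state trajectory generated by the dynamics `x(i+1) = A x(i) + B u(i)` from `x(0) = zp`. -/
noncomputable def xTraj (nu ny m : ℕ)
    (A : Matrix (Fin m × (Fin nu ⊕ Fin ny)) (Fin m × (Fin nu ⊕ Fin ny)) ℝ)
    (B : Matrix (Fin m × (Fin nu ⊕ Fin ny)) (Fin nu) ℝ)
    (zp : Fin m × (Fin nu ⊕ Fin ny) → ℝ) (us : ℕ → Fin nu → ℝ) :
    ℕ → (Fin m × (Fin nu ⊕ Fin ny)) → ℝ
  | 0 => zp
  | k + 1 => A *ᵥ xTraj nu ny m A B zp us k + B *ᵥ us k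

/-!
Substituting `y = C x + D u` turns `x⁺ = A x + B u` into the innovation form
`x⁺ = (A - K C) x + (B - K D) u + K y`. Unrolling the latter expresses the outputs as
`y_f = Φ^p z + Φ^u u_f + Φ^y y_f`, and `1 - Φ^y` is unipotent, so the output of the state-space
model started at `z` is exactly `P z + F u_f`. Hence forgetting the state maps the MPC-feasible
tuples onto the TPC-feasible pairs and preserves the objective.
-/

section OneSub

variable {n R : Type*} [Fintype n] [DecidableEq n] [CommRing R] {M : Matrix n n R}

theorem det_one_sub_of_strictly_block_lower {α : Type*} [LinearOrder α] (b : n → α)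
    (hM : ∀ i j, b i ≤ b j → M i j = 0) : (1 - M).det = 1 := by
  have hM_tri : M.BlockTriangular (OrderDual.toDual ∘ b) := fun i j hij => hM i j hij.le
  have block_eq_one (k : αᵒᵈ) : (1 - M).toSquareBlock (OrderDual.toDual ∘ b) k = 1 := by
    ext ⟨i, hi⟩ ⟨j, hj⟩
    have hij : M i j = 0 := hM i j (OrderDual.toDual_le_toDual.mp (hj.trans hi.symm).le)
    simp [toSquareBlock_def, one_apply, hij]
  rw [(blockTriangular_one.sub hM_tri).det]
  exact prod_eq_one fun k _ => by rw [block_eq_one, det_one]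

theorem eq_inv_one_sub_mulVec_iff (hM : IsUnit (1 - M).det) {v w : n → R} :
    v = (1 - M)⁻¹ *ᵥ w ↔ v = w + M *ᵥ v := by
  have hinj : Function.Injective (1 - M).mulVec :=
    mulVec_injective_of_isUnit ((isUnit_iff_isUnit_det _).mpr hM)
  rw [← hinj.eq_iff, mulVec_mulVec, mul_nonsing_inv _ hM, one_mulVec, sub_mulVec, one_mulVec,
    sub_eq_iff_eq_add]

end OneSub

section ForcedResponse

variable {σ R : Type*} [Fintype σ] [DecidableEq σ] [Semiring R] {h : ℕ}

/-- The state at time `k` of `x⁺ = A x + w` started at `0`. The sum runs over the whole horizon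
`Fin h`, as the block rows of the Markov-parameter matrices do. -/
def forcedResponse (A : Matrix σ σ R) (w : Fin h → σ → R) (k : ℕ) : σ → R :=
  ∑ j : Fin h, if (j : ℕ) < k then A ^ (k - j - 1) *ᵥ w j else 0

theorem forcedResponse_succ (A : Matrix σ σ R) (w : Fin h → σ → R) (i : Fin h) :
    forcedResponse A w (i + 1) = A *ᵥ forcedResponse A w i + w i := by
  have split_last (j : Fin h) :
      (if (j : ℕ) < i + 1 then A ^ ((i : ℕ) + 1 - j - 1) *ᵥ w j else 0) =
        A *ᵥ (if (j : ℕ) < i then A ^ ((i : ℕ) - j - 1) *ᵥ w j else 0) +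
          if j = i then w j else 0 := by
    rcases lt_trichotomy j i with hji | rfl | hij
    · have hji' : (j : ℕ) < i := hji
      have hexp : (i : ℕ) + 1 - j - 1 = (i : ℕ) - j - 1 + 1 := by omega
      simp [hji', hji'.trans (Nat.lt_succ_self _), hji.ne, hexp, pow_succ']
    · simp
    · have hij' : (i : ℕ) < j := hij
      simp [hij'.not_gt, Nat.not_lt.mpr (Nat.succ_le_of_lt hij'), hij.ne']
  simp only [forcedResponse, split_last, sum_add_distrib, mulVec_sum, sum_ite_eq', mem_univ,
    if_true]

theorem forcedResponse_add (A : Matrix σ σ R) (v w : Fin h → σ → R) (k : ℕ) :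
    forcedResponse A (fun j => v j + w j) k = forcedResponse A v k + forcedResponse A w k := by
  simp only [forcedResponse, ← sum_add_distrib, mulVec_add, ite_add_ite, add_zero]

theorem eq_pow_mulVec_add_forcedResponse {A : Matrix σ σ R} {w : Fin h → σ → R}
    {x : Fin (h + 1) → σ → R} (hx : ∀ i : Fin h, x i.succ = A *ᵥ x i.castSucc + w i)
    (i : Fin (h + 1)) : x i = A ^ (i : ℕ) *ᵥ x 0 + forcedResponse A w i := by
  induction i using Fin.induction with
  | zero => simp [forcedResponse]
  | succ i ih =>
    rw [hx, ih, Fin.val_succ, Fin.val_castSucc, forcedResponse_succ, mulVec_add, mulVec_mulVec,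
      ← pow_succ', add_assoc]

end ForcedResponse

section StateTrajectory

variable {σ ι R : Type*} [Fintype σ] [Fintype ι] [Semiring R] {h : ℕ}

/-- `x` is the state trajectory over horizon `h` of `x⁺ = A x + B u` started at `z`. -/
def IsStateTrajectory (A : Matrix σ σ R) (B : Matrix σ ι R) (z : σ → R)
    (x : Fin (h + 1) → σ → R) (u : Fin h → ι → R) : Prop :=
  x 0 = z ∧ ∀ i : Fin h, x i.succ = A *ᵥ x i.castSucc + B *ᵥ u i

theorem exists_isStateTrajectory (A : Matrix σ σ R) (B : Matrix σ ι R) (z : σ → R)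
    (u : Fin h → ι → R) : ∃ x, IsStateTrajectory A B z x u :=
  ⟨Fin.induction z fun i xi => A *ᵥ xi + B *ᵥ u i, rfl, fun _ => Fin.induction_succ _ _ _⟩

theorem isStateTrajectory_xTraj {nu ny m : ℕ}
    (A : Matrix (Fin m × (Fin nu ⊕ Fin ny)) (Fin m × (Fin nu ⊕ Fin ny)) ℝ)
    (B : Matrix (Fin m × (Fin nu ⊕ Fin ny)) (Fin nu) ℝ) (z : Fin m × (Fin nu ⊕ Fin ny) → ℝ)
    {us : ℕ → Fin nu → ℝ} {u : Fin h → Fin nu → ℝ} (hu : ∀ i : Fin h, us i = u i) :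
    IsStateTrajectory A B z (fun i => xTraj nu ny m A B z us i) u :=
  ⟨rfl, fun i => hu i ▸ rfl⟩

end StateTrajectory

theorem mulVec_add_mulVec_eq_innovation {σ ι κ R : Type*} [Fintype σ] [Fintype ι] [Fintype κ]
    [Ring R] (A : Matrix σ σ R) (B : Matrix σ ι R) (C : Matrix κ σ R) (D : Matrix κ ι R)
    (K : Matrix σ κ R) (x : σ → R) (u : ι → R) :
    A *ᵥ x + B *ᵥ u =
      (A - K * C) *ᵥ x + ((B - K * D) *ᵥ u + K *ᵥ (C *ᵥ x + D *ᵥ u)) := by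
  simp only [sub_mulVec, mulVec_add, mulVec_mulVec]
  abel

section Predictor

variable {σ : Type} [Fintype σ] [DecidableEq σ] {nu ny h : ℕ}

theorem obsMat_mulVec (C : Matrix (Fin ny) σ ℝ) (𝒜 : Matrix σ σ ℝ) (z : σ → ℝ) :
    obsMat σ ny h C 𝒜 *ᵥ z = Function.uncurry fun i : Fin h => C *ᵥ 𝒜 ^ (i : ℕ) *ᵥ z := by
  simp only [mulVec_mulVec]
  rfl

theorem markovU_mulVec_uncurry (C : Matrix (Fin ny) σ ℝ) (𝒜 : Matrix σ σ ℝ)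
    (ℬ : Matrix σ (Fin nu) ℝ) (D : Matrix (Fin ny) (Fin nu) ℝ) (u : Fin h → Fin nu → ℝ) :
    markovU σ nu ny h C 𝒜 ℬ D *ᵥ Function.uncurry u =
      Function.uncurry fun i : Fin h =>
        C *ᵥ forcedResponse 𝒜 (fun j => ℬ *ᵥ u j) i + D *ᵥ u i := by
  ext ⟨i, b⟩
  have block_row (j : Fin h) :
      ∑ a, markovU σ nu ny h C 𝒜 ℬ D (i, b) (j, a) * u j a =
        (C *ᵥ if (j : ℕ) < i then 𝒜 ^ ((i : ℕ) - j - 1) *ᵥ ℬ *ᵥ u j else 0) b +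
          if i = j then (D *ᵥ u j) b else 0 := by
    rcases lt_trichotomy j i with hji | rfl | hij
    · have hji' : (j : ℕ) < i := hji
      simp only [markovU, hji', hji'.ne', hji.ne', if_true, if_false, add_zero, mulVec_mulVec,
        Matrix.mul_assoc]
      rfl
    · simp [markovU, mulVec, dotProduct]
    · have hij' : (i : ℕ) < j := hij
      simp [markovU, hij'.ne, hij'.not_gt, hij.ne]
  calc
    _ = ∑ j, ∑ a, markovU σ nu ny h C 𝒜 ℬ D (i, b) (j, a) * u j a := Fintype.sum_prod_type _
    _ = _ := by
      simp only [block_row, sum_add_distrib, sum_ite_eq, mem_univ, if_true, forcedResponse,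
        mulVec_sum, Function.uncurry_apply_pair, Pi.add_apply, Finset.sum_apply]

theorem markovY_eq_markovU_zero (C : Matrix (Fin ny) σ ℝ) (𝒜 : Matrix σ σ ℝ)
    (K : Matrix σ (Fin ny) ℝ) : markovY σ ny h C 𝒜 K = markovU σ ny ny h C 𝒜 K 0 := by
  ext q r
  by_cases hqr : (q.1 : ℕ) = r.1 <;> simp [markovY, markovU, hqr]

theorem markovY_mulVec_uncurry (C : Matrix (Fin ny) σ ℝ) (𝒜 : Matrix σ σ ℝ)
    (K : Matrix σ (Fin ny) ℝ) (y : Fin h → Fin ny → ℝ) :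
    markovY σ ny h C 𝒜 K *ᵥ Function.uncurry y =
      Function.uncurry fun i : Fin h => C *ᵥ forcedResponse 𝒜 (fun j => K *ᵥ y j) i := by
  simp only [markovY_eq_markovU_zero, markovU_mulVec_uncurry, zero_mulVec, add_zero]

theorem det_one_sub_markovY (C : Matrix (Fin ny) σ ℝ) (𝒜 : Matrix σ σ ℝ)
    (K : Matrix σ (Fin ny) ℝ) : (1 - markovY σ ny h C 𝒜 K).det = 1 :=
  det_one_sub_of_strictly_block_lower Prod.fst fun _ _ hqr => if_neg (Fin.not_lt.mpr hqr)

variable (A : Matrix σ σ ℝ) (B : Matrix σ (Fin nu) ℝ) (C : Matrix (Fin ny) σ ℝ)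
  (D : Matrix (Fin ny) (Fin nu) ℝ) (K : Matrix σ (Fin ny) ℝ)

/-- The predictor matrix `P = (1 - Φ^y)⁻¹ Φ^p` of the state-space model `(A, C)` with gain `K`. -/
noncomputable def predictorP (h : ℕ) : Matrix (Fin h × Fin ny) σ ℝ :=
  (1 - markovY σ ny h C (A - K * C) K)⁻¹ * obsMat σ ny h C (A - K * C)

/-- The predictor matrix `F = (1 - Φ^y)⁻¹ Φ^u` of the state-space model `(A, B, C, D)` with
gain `K`. -/
noncomputable def predictorF (h : ℕ) : Matrix (Fin h × Fin ny) (Fin h × Fin nu) ℝ :=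
  (1 - markovY σ ny h C (A - K * C) K)⁻¹ * markovU σ nu ny h C (A - K * C) (B - K * D) D

variable {A B}

theorem IsStateTrajectory.uncurry_output_eq {z : σ → ℝ} {x : Fin (h + 1) → σ → ℝ}
    {u : Fin h → Fin nu → ℝ} (hx : IsStateTrajectory A B z x u) :
    (Function.uncurry fun i : Fin h => C *ᵥ x i.castSucc + D *ᵥ u i) =
      predictorP A C K h *ᵥ z + predictorF A B C D K h *ᵥ Function.uncurry u := by
  generalize hy : (fun i : Fin h => C *ᵥ x i.castSucc + D *ᵥ u i) = y
  have output (i : Fin h) : y i = C *ᵥ x i.castSucc + D *ᵥ u i := (congrFun hy i).symm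
  have innovation (i : Fin h) : x i.succ =
      (A - K * C) *ᵥ x i.castSucc + ((B - K * D) *ᵥ u i + K *ᵥ y i) := by
    rw [hx.2, mulVec_add_mulVec_eq_innovation A B C D K, output]
  have unrolled (i : Fin h) : x i.castSucc = (A - K * C) ^ (i : ℕ) *ᵥ z +
      (forcedResponse (A - K * C) (fun j => (B - K * D) *ᵥ u j) i +
        forcedResponse (A - K * C) (fun j => K *ᵥ y j) i) := by
    rw [eq_pow_mulVec_add_forcedResponse innovation, forcedResponse_add, hx.1, Fin.val_castSucc]
  rw [predictorP, predictorF, ← mulVec_mulVec, ← mulVec_mulVec, ← mulVec_add,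
    eq_inv_one_sub_mulVec_iff (by simp only [det_one_sub_markovY, isUnit_one]), obsMat_mulVec,
    markovU_mulVec_uncurry, markovY_mulVec_uncurry]
  ext ⟨i, b⟩
  simp only [Function.uncurry_apply_pair, Pi.add_apply]
  rw [output, unrolled]
  simp only [mulVec_add, Pi.add_apply]
  ring

end Predictor

section Optimality

variable {σ : Type} [Fintype σ] [DecidableEq σ] {nu ny h : ℕ}
  (A : Matrix σ σ ℝ) (B : Matrix σ (Fin nu) ℝ) (C : Matrix (Fin ny) σ ℝ)
  (D : Matrix (Fin ny) (Fin nu) ℝ) (K : Matrix σ (Fin ny) ℝ) (z : σ → ℝ)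
  (S : Set ((Fin h × Fin nu → ℝ) × (Fin h × Fin ny → ℝ)))

/-- The feasible pairs `(u_f, y_f)` of the TPC problem; `S` collects the constraints on the
stacked inputs and outputs. -/
def tpcFeasible : Set ((Fin h × Fin nu → ℝ) × (Fin h × Fin ny → ℝ)) :=
  {p | p ∈ S ∧ p.2 = predictorP A C K h *ᵥ z + predictorF A B C D K h *ᵥ p.1}

/-- The stacked pair `(u_f, y_f)` of a state-input-output tuple `(x, u, y)`. -/
def stackedInputOutput
    (p : (Fin (h + 1) → σ → ℝ) × (Fin h → Fin nu → ℝ) × (Fin h → Fin ny → ℝ)) :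
    (Fin h × Fin nu → ℝ) × (Fin h × Fin ny → ℝ) :=
  (Function.uncurry p.2.1, Function.uncurry p.2.2)

/-- The feasible tuples `(x, u, y)` of the MPC problem; `S` collects the constraints on the
stacked inputs and outputs. -/
def mpcFeasible : Set ((Fin (h + 1) → σ → ℝ) × (Fin h → Fin nu → ℝ) × (Fin h → Fin ny → ℝ)) :=
  {p | stackedInputOutput p ∈ S ∧ p.1 0 = z ∧
    (∀ i : Fin h, p.1 i.succ = A *ᵥ p.1 i.castSucc + B *ᵥ p.2.1 i) ∧
    ∀ i : Fin h, p.2.2 i = C *ᵥ p.1 i.castSucc + D *ᵥ p.2.1 i}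

variable {A B z} {x : Fin (h + 1) → σ → ℝ} {u : Fin h → Fin nu → ℝ}

theorem IsStateTrajectory.mem_mpcFeasible_iff (hx : IsStateTrajectory A B z x u)
    (y : Fin h → Fin ny → ℝ) :
    (x, u, y) ∈ mpcFeasible A B C D z S ↔
      (Function.uncurry u, Function.uncurry y) ∈ tpcFeasible A B C D K z S := by
  have output_iff : (∀ i : Fin h, y i = C *ᵥ x i.castSucc + D *ᵥ u i) ↔ Function.uncurry y =
      predictorP A C K h *ᵥ z + predictorF A B C D K h *ᵥ Function.uncurry u := by
    rw [← hx.uncurry_output_eq, Function.uncurry_injective.eq_iff, funext_iff]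
  exact and_congr_right fun _ => and_assoc.symm.trans ((and_iff_right hx).trans output_iff)

variable (A B z) in
theorem image_stackedInputOutput_mpcFeasible :
    stackedInputOutput '' mpcFeasible A B C D z S = tpcFeasible A B C D K z S := by
  ext ⟨uf, yf⟩
  constructor
  · rintro ⟨⟨x, u, y⟩, hxuy, h_eq⟩
    have hx : IsStateTrajectory A B z x u := ⟨hxuy.2.1, hxuy.2.2.1⟩
    exact h_eq ▸ (hx.mem_mpcFeasible_iff C D K S y).mp hxuy
  · intro hfeas
    obtain ⟨x, hx⟩ := exists_isStateTrajectory A B z (Function.curry uf)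
    exact ⟨(x, Function.curry uf, Function.curry yf),
      (hx.mem_mpcFeasible_iff C D K S _).mpr hfeas, rfl⟩

theorem tpc_optimal_iff_mpc_optimal_general {β : Type*} [Preorder β]
    (f : (Fin h × Fin nu → ℝ) × (Fin h × Fin ny → ℝ) → β) (hx : IsStateTrajectory A B z x u)
    (y : Fin h → Fin ny → ℝ) :
    ((Function.uncurry u, Function.uncurry y) ∈ tpcFeasible A B C D K z S ∧
        IsMinOn f (tpcFeasible A B C D K z S) (Function.uncurry u, Function.uncurry y)) ↔
      ((x, u, y) ∈ mpcFeasible A B C D z S ∧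
        IsMinOn (f ∘ stackedInputOutput) (mpcFeasible A B C D z S) (x, u, y)) := by
  refine and_congr (hx.mem_mpcFeasible_iff C D K S y).symm ?_
  rw [← image_stackedInputOutput_mpcFeasible, isMinOn_iff, isMinOn_iff, Set.forall_mem_image]
  rfl

end Optimality

/-- **Corollary 1.** With the state-space predictor `P = (I−Φ^y)⁻¹ Φ^p`,
`F = (I−Φ^y)⁻¹ Φ^u` built from `C, D` via the shift construction, the pair `(u_f⋆, y_f⋆)` is
optimal for the TPC problem if and only if the corresponding tuple of states
`x⋆(1|t), …, x⋆(h+1|t)` (with `x⋆(1|t) = z_p(t)`, `x⋆(i+1|t) = A x⋆(i|t) + B u⋆(i|t)`),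
inputs `u⋆(1|t), …, u⋆(h|t)`, and outputs `y⋆(1|t), …, y⋆(h|t)` is optimal for the MPC
problem. -/
theorem tpc_optimal_iff_mpc_optimal
    (nu ny m h J : ℕ) (hnu : 0 < nu) (hny : 0 < ny) (hm : 0 < m) (hh : 0 < h)
    (C : Matrix (Fin ny) (Fin m × (Fin nu ⊕ Fin ny)) ℝ)
    (D : Matrix (Fin ny) (Fin nu) ℝ)
    (zp : Fin m × (Fin nu ⊕ Fin ny) → ℝ)
    (c : ℕ → ((Fin h × Fin nu → ℝ) × (Fin h × Fin ny → ℝ)) → ℝ)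
    (ufstar : Fin h × Fin nu → ℝ) (yfstar : Fin h × Fin ny → ℝ) :
    letI A := shiftA nu ny m C
    letI B := shiftB nu ny m D
    letI K := shiftK nu ny m
    letI 𝒜 := A - K * C
    letI ℬ := B - K * D
    letI Φy := markovY (Fin m × (Fin nu ⊕ Fin ny)) ny h C 𝒜 K
    letI P := (1 - Φy)⁻¹ * obsMat (Fin m × (Fin nu ⊕ Fin ny)) ny h C 𝒜
    letI F := (1 - Φy)⁻¹ * markovU (Fin m × (Fin nu ⊕ Fin ny)) nu ny h C 𝒜 ℬ D
    -- feasibility and optimality for the TPC problem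
    letI feasT : (Fin h × Fin nu → ℝ) → (Fin h × Fin ny → ℝ) → Prop := fun uf yf =>
      (∀ j : ℕ, 1 ≤ j → j ≤ J → c j (uf, yf) ≤ 0) ∧ yf = P *ᵥ zp + F *ᵥ uf
    -- feasibility for the MPC problem
    letI feasM : (Fin (h + 1) → (Fin m × (Fin nu ⊕ Fin ny)) → ℝ) →
        (Fin h → Fin nu → ℝ) → (Fin h → Fin ny → ℝ) → Prop := fun x us ys =>
      (∀ j : ℕ, 1 ≤ j → j ≤ J →
        c j (fun r : Fin h × Fin nu => us r.1 r.2, fun q : Fin h × Fin ny => ys q.1 q.2) ≤ 0) ∧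
      x 0 = zp ∧
      (∀ i : Fin h, x i.succ = A *ᵥ x i.castSucc + B *ᵥ us i) ∧
      (∀ i : Fin h, ys i = C *ᵥ x i.castSucc + D *ᵥ us i)
    -- the candidate MPC tuple built from (ufstar, yfstar)
    letI ustar : Fin h → Fin nu → ℝ := fun i a => ufstar (i, a)
    letI ystar : Fin h → Fin ny → ℝ := fun i b => yfstar (i, b)
    letI xstar : Fin (h + 1) → (Fin m × (Fin nu ⊕ Fin ny)) → ℝ := fun i =>
      xTraj nu ny m A B zp
        (fun k a => if hk : k < h then ufstar (⟨k, hk⟩, a) else 0) (i : ℕ)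
    -- optimality of (ufstar, yfstar) for TPC iff optimality of (xstar, ustar, ystar) for MPC
    ((feasT ufstar yfstar ∧
        ∀ uf yf, feasT uf yf → c 0 (ufstar, yfstar) ≤ c 0 (uf, yf))
    ↔
    (feasM xstar ustar ystar ∧
        ∀ x us ys, feasM x us ys →
          c 0 (fun r : Fin h × Fin nu => ustar r.1 r.2,
               fun q : Fin h × Fin ny => ystar q.1 q.2) ≤
          c 0 (fun r : Fin h × Fin nu => us r.1 r.2,
               fun q : Fin h × Fin ny => ys q.1 q.2))) := by
  have hx := isStateTrajectory_xTraj (shiftA nu ny m C) (shiftB nu ny m D) zp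
    (us := fun k a => if hk : k < h then ufstar (⟨k, hk⟩, a) else 0) (u := Function.curry ufstar)
    fun i => funext fun a => dif_pos i.isLt
  have optimal_iff := tpc_optimal_iff_mpc_optimal_general C D (shiftK nu ny m)
    {p | ∀ j : ℕ, 1 ≤ j → j ≤ J → c j p ≤ 0} (c 0) hx (Function.curry yfstar)
  simp only [isMinOn_iff, Prod.forall] at optimal_iff
  exact optimal_iff
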